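/- arXiv:hep-th/0602165 — 7 statements merged into one kernel-verified Lean document; each statement's English description precedes it below -/
import Mathlib

section
/- For all complex numbers s₁, s₂ with 3s₁ ≠ s₂ and s₁ ≠ 2s₂, the Horn parametrization lands on the discriminant: Δ₀( −s₁²·(s₁−2s₂)/(3s₁−s₂)³ , −s₂·(3s₁−s₂)/(s₁−2s₂)² ) = 0. -/
/-- The primary discriminant of the moduli space of complexified Kähler forms of the
`ℂ³/ℤ₅` model. -/
noncomputable def Δ₀ (x₁ x₂ : ℂ) : ℂ :=
  3125 * x₁ ^ 2 * x₂ ^ 3 + 500 * x₁ * x₂ ^ 2 - 225 * x₁ * x₂ + 16 * x₂ ^ 2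
    + 27 * x₁ - 8 * x₂ + 1

/-- The Horn parametrization associated to the charge matrix
`Q = [[1,0,1,−3,1],[0,1,0,1,−2]]` lands on the discriminant `Δ₀ = 0`. -/
theorem horn_parametrization_lands_on_discriminant (s₁ s₂ : ℂ)
    (h₁ : 3 * s₁ ≠ s₂) (h₂ : s₁ ≠ 2 * s₂) :
    Δ₀ (-(s₁ ^ 2 * (s₁ - 2 * s₂)) / (3 * s₁ - s₂) ^ 3)
       (-(s₂ * (3 * s₁ - s₂)) / (s₁ - 2 * s₂) ^ 2) = 0 := by
  have ha : 3 * s₁ - s₂ ≠ 0 := sub_ne_zero.mpr h₁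
  have hb : s₁ - 2 * s₂ ≠ 0 := sub_ne_zero.mpr h₂
  unfold Δ₀
  generalize hA : 3 * s₁ - s₂ = a at *
  generalize hB : s₁ - 2 * s₂ = b at *
  field_simp
  subst hA hB
  ring
end

section
/- The discriminant curve has exactly two singular points: if (x₁,x₂) ∈ ℂ² satisfies Δ₀(x₁,x₂) = 0, ∂Δ₀/∂x₁(x₁,x₂) = 0 and ∂Δ₀/∂x₂(x₁,x₂) = 0, then (x₁,x₂) = (−1/25, 1/5) or (x₁,x₂) = (−32/675, 9/20). -/
/-- The discriminant curve `Δ₀ = 0` has exactly two singular points: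
`(−1/25, 1/5)` and `(−32/675, 9/20)`. -/
theorem singular_points_classification (x₁ x₂ : ℂ)
    (h₀ : Δ₀ x₁ x₂ = 0)
    (h₁ : deriv (fun t : ℂ => Δ₀ t x₂) x₁ = 0)
    (h₂ : deriv (fun t : ℂ => Δ₀ x₁ t) x₂ = 0) :
    (x₁ = -1/25 ∧ x₂ = 1/5) ∨ (x₁ = -32/675 ∧ x₂ = 9/20) := by
  have hd : HasDerivAt (fun t : ℂ => Δ₀ t x₂)
      (6250 * x₁ * x₂ ^ 3 + 500 * x₂ ^ 2 - 225 * x₂ + 27) x₁ := by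
    have h := (((hasDerivAt_id x₁).pow 2).const_mul (3125 * x₂ ^ 3)).add
      (((hasDerivAt_id x₁).const_mul (500 * x₂ ^ 2 - 225 * x₂ + 27)).add_const
        (16 * x₂ ^ 2 - 8 * x₂ + 1))
    have e : (fun t : ℂ => Δ₀ t x₂) = (fun t : ℂ => 3125 * x₂ ^ 3 * t ^ 2 +
        ((500 * x₂ ^ 2 - 225 * x₂ + 27) * t + (16 * x₂ ^ 2 - 8 * x₂ + 1))) := by
      funext t
      unfold Δ₀
      ring
    rw [e]
    refine HasDerivAt.congr_deriv h ?_
    simp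
    ring
  rw [hd.deriv] at h₁
  unfold Δ₀ at h₀
  have key : (5 * x₂ - 1) ^ 2 * (20 * x₂ - 9) ^ 3 = 0 := by
    linear_combination (4 * 3125 * x₂ ^ 3) * h₀ -
      (6250 * x₁ * x₂ ^ 3 + 500 * x₂ ^ 2 - 225 * x₂ + 27) * h₁
  rcases mul_eq_zero.mp key with h | h
  · have hy : x₂ = 1 / 5 := by
      have := pow_eq_zero_iff (two_ne_zero) |>.mp h
      linear_combination this / 5
    subst hy
    exact Or.inl ⟨by linear_combination h₁ / 50, rfl⟩
  · have hy : x₂ = 9 / 20 := by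
      have := pow_eq_zero_iff (three_ne_zero) |>.mp h
      linear_combination this / 20
    subst hy
    exact Or.inr ⟨by linear_combination h₁ * 8000 / (6250 * 729), rfl⟩
end

section
/- At the singular point (−32/675, 9/20) the discriminant Δ₀ has a cusp: the Hessian matrix H of second-order partial derivatives of Δ₀ at (−32/675, 9/20) is nonzero but has determinant 0, the vector v = (32, −405) spans its kernel (H·v = 0), and the third directional derivative of Δ₀ along v at (−32/675, 9/20) is nonzero. -/
/-- The Hessian matrix of `Δ₀` at the singular point `(−32/675, 9/20)`. -/
noncomputable def hessianAtCusp : Matrix (Fin 2) (Fin 2) ℂ :=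
  !![deriv (fun x₁ : ℂ => deriv (fun t : ℂ => Δ₀ t (9/20)) x₁) (-32/675),
     deriv (fun x₂ : ℂ => deriv (fun t : ℂ => Δ₀ t x₂) (-32/675)) (9/20);
     deriv (fun x₂ : ℂ => deriv (fun t : ℂ => Δ₀ t x₂) (-32/675)) (9/20),
     deriv (fun x₂ : ℂ => deriv (fun t : ℂ => Δ₀ (-32/675) t) x₂) (9/20)]

theorem deriv_quintic (c0 c1 c2 c3 c4 c5 : ℂ) (f : ℂ → ℂ)
    (hf : ∀ t, f t = c0 + c1 * t + c2 * t ^ 2 + c3 * t ^ 3 + c4 * t ^ 4 + c5 * t ^ 5) (t : ℂ) :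
    deriv f t = c1 + 2 * c2 * t + 3 * c3 * t ^ 2 + 4 * c4 * t ^ 3 + 5 * c5 * t ^ 4 := by
  have hfe : f = fun t => c0 + c1 * t + c2 * t ^ 2 + c3 * t ^ 3 + c4 * t ^ 4 + c5 * t ^ 5 :=
    funext hf
  have h1 := (hasDerivAt_id' t).const_mul c1
  have h2 := (hasDerivAt_pow 2 t).const_mul c2
  have h3 := (hasDerivAt_pow 3 t).const_mul c3
  have h4 := (hasDerivAt_pow 4 t).const_mul c4
  have h5 := (hasDerivAt_pow 5 t).const_mul c5
  have h := (((((hasDerivAt_const t c0).add h1).add h2).add h3).add h4).add h5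
  rw [hfe]
  refine (HasDerivAt.deriv h).trans ?_
  push_cast
  ring

theorem deriv_fst (x y : ℂ) :
    deriv (fun t : ℂ => Δ₀ t y) x = 6250 * x * y ^ 3 + 500 * y ^ 2 - 225 * y + 27 := by
  rw [deriv_quintic (16 * y ^ 2 - 8 * y + 1) (500 * y ^ 2 - 225 * y + 27) (3125 * y ^ 3) 0 0 0]
  · ring
  · intro t
    simp only [Δ₀]
    ring

theorem deriv_snd (x y : ℂ) :
    deriv (fun t : ℂ => Δ₀ x t) y
      = 9375 * x ^ 2 * y ^ 2 + 1000 * x * y - 225 * x + 32 * y - 8 := by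
  rw [deriv_quintic (27 * x + 1) (-225 * x - 8) (500 * x + 16) (3125 * x ^ 2) 0 0]
  · ring
  · intro t
    simp only [Δ₀]
    ring

theorem hessian_eq : hessianAtCusp = !![18225 / 32, 45; 45, 32 / 9] := by
  have h11 : deriv (fun x₁ : ℂ => deriv (fun t : ℂ => Δ₀ t (9/20)) x₁) (-32/675)
      = 18225 / 32 := by
    rw [deriv_quintic (500 * (9/20) ^ 2 - 225 * (9/20) + 27) (6250 * (9/20) ^ 3) 0 0 0 0]
    · norm_num
    · intro t
      rw [deriv_fst]
      ring
  have h12 : deriv (fun x₂ : ℂ => deriv (fun t : ℂ => Δ₀ t x₂) (-32/675)) (9/20) = 45 := by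
    rw [deriv_quintic 27 (-225) 500 (6250 * (-32/675)) 0 0]
    · norm_num
    · intro t
      rw [deriv_fst]
      ring
  have h22 : deriv (fun x₂ : ℂ => deriv (fun t : ℂ => Δ₀ (-32/675) t) x₂) (9/20) = 32 / 9 := by
    rw [deriv_quintic (-225 * (-32/675) - 8) (1000 * (-32/675) + 32) (9375 * (-32/675) ^ 2) 0 0 0]
    · norm_num
    · intro t
      rw [deriv_snd]
      ring
  rw [hessianAtCusp, h11, h12, h22]

theorem third_deriv :
    iteratedDeriv 3 (fun t : ℂ => Δ₀ (-32/675 + t * 32) (9/20 + t * (-405))) 0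
      = -4374000000 := by
  rw [iteratedDeriv_succ, iteratedDeriv_succ, iteratedDeriv_one]
  have h1 := deriv_quintic 0 0 0 (-729000000) 1338444000000 (-212576400000000)
    (fun t : ℂ => Δ₀ (-32/675 + t * 32) (9/20 + t * (-405)))
    (by intro t; simp only [Δ₀]; ring)
  have h2 := deriv_quintic 0 0 (3 * (-729000000)) (4 * 1338444000000) (5 * (-212576400000000)) 0
    _ (fun t => (h1 t).trans (by ring))
  have h3 := deriv_quintic 0 (2 * (3 * (-729000000))) (3 * (4 * 1338444000000))
    (4 * (5 * (-212576400000000))) 0 0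
    _ (fun t => (h2 t).trans (by ring))
  rw [h3]
  norm_num

/-- At `(−32/675, 9/20)` the discriminant `Δ₀` has a cusp: the Hessian is nonzero with
vanishing determinant, its kernel is spanned by `v = (32, −405)`, and the third
directional derivative of `Δ₀` along `v` at the point is nonzero. -/
theorem cusp_at_singular_point :
    hessianAtCusp ≠ 0 ∧
    hessianAtCusp.det = 0 ∧
    hessianAtCusp.mulVec ![32, -405] = 0 ∧
    iteratedDeriv 3 (fun t : ℂ => Δ₀ (-32/675 + t * 32) (9/20 + t * (-405))) 0 ≠ 0 := by
  rw [hessian_eq, third_deriv]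
  refine ⟨?_, ?_, ?_, by norm_num⟩
  · intro h
    have := congrFun (congrFun h 0) 1
    norm_num at this
  · rw [Matrix.det_fin_two_of]
    norm_num
  · ext i
    fin_cases i <;> norm_num [Matrix.mulVec, dotProduct, Fin.sum_univ_two]
end

section
/- For all complex numbers s₁, s₂ with s₁ ≠ s₂ and 5s₁ + s₂ ≠ 0, the Horn parametrization in the ℤ₂-phase coordinates lands on the discriminant: Δ̃( −16·s₁⁴·(s₁−s₂)/(5s₁+s₂)⁵ , −4·s₂²/((s₁−s₂)·(5s₁+s₂)) ) = 0. -/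
/-- The discriminant of the `ℂ³/ℤ₅` model rewritten in the coordinates
`(y₁, y₂) = (x₁²x₂, 1/x₂)` of the `ℤ₂` phase. -/
noncomputable def Δtilde (y₁ y₂ : ℂ) : ℂ :=
  (y₂ - 4) ^ 4 + 9765625 * y₁ ^ 2
    + (100000 - 300000 * y₂ + 231250 * y₂ ^ 2 - 77625 * y₂ ^ 3 + 12150 * y₂ ^ 4
        - 729 * y₂ ^ 5) * y₁

/-- The Horn parametrization associated to the charge matrix
`Q = [[2,1,2,−5,0],[0,−1,0,−1,2]]` lands on the discriminant `Δ̃ = 0`. -/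
theorem horn_parametrization_Z2_phase (s₁ s₂ : ℂ)
    (h₁ : s₁ ≠ s₂) (h₂ : 5 * s₁ + s₂ ≠ 0) :
    Δtilde (-(16 * s₁ ^ 4 * (s₁ - s₂)) / (5 * s₁ + s₂) ^ 5)
           (-(4 * s₂ ^ 2) / ((s₁ - s₂) * (5 * s₁ + s₂))) = 0 := by
  have h : s₁ - s₂ ≠ 0 := sub_ne_zero.mpr h₁
  unfold Δtilde
  generalize ha : s₁ - s₂ = a at *
  generalize hb : 5 * s₁ + s₂ = b at *
  field_simp
  rw [← ha, ← hb]
  ring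
end

section
/- Let R be the localization of the polynomial ring ℂ[x,y] at the powers of y. The ℂ-subalgebra of R generated by the three elements y⁻¹, x²·y, and x is isomorphic as a ℂ-algebra to the quotient ℂ[u,v,w]/(u·v − w²), via the map sending u ↦ y⁻¹, v ↦ x²·y, w ↦ x. -/
open MvPolynomial

/-- The polynomial ring `ℂ[x,y]`. -/
noncomputable abbrev PolyXY : Type := MvPolynomial (Fin 2) ℂ

/-- The localization `R` of `ℂ[x,y]` at the powers of `y`. -/
noncomputable abbrev LocAwayY : Type := Localization.Away (X 1 : PolyXY)

/-- The image of `x` in the localization. -/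
noncomputable def xElem : LocAwayY := algebraMap PolyXY LocAwayY (X 0)

/-- The image of `y` in the localization. -/
noncomputable def yElem : LocAwayY := algebraMap PolyXY LocAwayY (X 1)

/-- The element `y⁻¹` of the localization. -/
noncomputable def yInv : LocAwayY := IsLocalization.Away.invSelf (X 1 : PolyXY)

lemma yElem_mul_yInv : yElem * yInv = 1 :=
  IsLocalization.Away.mul_invSelf (X 1 : PolyXY)

noncomputable def psiMap : PolyXY →ₐ[ℂ] LocAwayY := aeval ![xElem, yInv]

lemma psiMap_unit : IsUnit ((psiMap : PolyXY →+* LocAwayY) (X 1)) := by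
  have : (psiMap : PolyXY →+* LocAwayY) (X 1) = yInv := by simp [psiMap]
  rw [this]
  exact IsUnit.of_mul_eq_one yElem (by rw [mul_comm]; exact yElem_mul_yInv)

noncomputable def sigmaMap : LocAwayY →+* LocAwayY :=
  IsLocalization.Away.lift (X 1 : PolyXY) psiMap_unit

lemma sigma_alg (p : PolyXY) : sigmaMap (algebraMap PolyXY LocAwayY p) = psiMap p :=
  IsLocalization.Away.lift_eq (X 1 : PolyXY) psiMap_unit p

lemma sigma_yInv : sigmaMap yInv = yElem := by
  have h1 : sigmaMap yElem = yInv := by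
    unfold yElem; rw [sigma_alg]; simp [psiMap]
  have h2 : sigmaMap yElem * sigmaMap yInv = 1 := by
    rw [← map_mul, yElem_mul_yInv, map_one]
  rw [h1] at h2
  calc sigmaMap yInv = (yElem * yInv) * sigmaMap yInv := by rw [yElem_mul_yInv, one_mul]
    _ = yElem * (yInv * sigmaMap yInv) := by ring
    _ = yElem := by rw [h2, mul_one]

lemma sigma_psi (p : PolyXY) : sigmaMap (psiMap p) = algebraMap PolyXY LocAwayY p := by
  have : (sigmaMap.comp (psiMap : PolyXY →+* LocAwayY)) = algebraMap PolyXY LocAwayY := by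
    apply MvPolynomial.ringHom_ext
    · intro r
      have h : psiMap (C r) = algebraMap PolyXY LocAwayY (C r) := by
        rw [← MvPolynomial.algebraMap_eq, AlgHom.commutes, IsScalarTower.algebraMap_apply ℂ PolyXY LocAwayY]
      have h' := sigma_alg (C r)
      change sigmaMap (psiMap (C r)) = _
      rw [h, h', h]
    · intro i
      fin_cases i
      · have h : psiMap (X 0) = xElem := by simp [psiMap]
        change sigmaMap (psiMap (X 0)) = xElem
        rw [h]; unfold xElem; rw [sigma_alg, h]; rfl
      · have h : psiMap (X 1) = yInv := by simp [psiMap]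
        change sigmaMap (psiMap (X 1)) = yElem
        rw [h, sigma_yInv]
  exact RingHom.congr_fun this p

lemma psi_inj (p : PolyXY) (h : psiMap p = 0) : p = 0 := by
  have h1 := sigma_psi p
  rw [h, map_zero] at h1
  have : Function.Injective (algebraMap PolyXY LocAwayY) :=
    IsLocalization.injective (M := Submonoid.powers (X 1 : PolyXY)) _
      (powers_le_nonZeroDivisors_of_noZeroDivisors (X_ne_zero 1))
  exact this (by rw [← h1, map_zero])

noncomputable def phiMap : MvPolynomial (Fin 3) ℂ →ₐ[ℂ] LocAwayY :=
  aeval ![yInv, xElem ^ 2 * yElem, xElem]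

noncomputable def iotaMap : PolyXY →ₐ[ℂ] MvPolynomial (Fin 3) ℂ := aeval ![X 2, X 0]

noncomputable abbrev relPoly : MvPolynomial (Fin 3) ℂ := X 0 * X 1 - X 2 ^ 2

lemma phi_rel : phiMap relPoly = 0 := by
  simp only [phiMap, relPoly, map_sub, map_mul, map_pow, aeval_X]
  simp only [Matrix.cons_val]
  linear_combination xElem ^ 2 * yElem_mul_yInv

lemma phi_iota (q : PolyXY) : phiMap (iotaMap q) = psiMap q := by
  have : phiMap.comp iotaMap = psiMap := by
    apply MvPolynomial.algHom_ext
    intro i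
    fin_cases i <;> simp [phiMap, iotaMap, psiMap]
  exact AlgHom.congr_fun this q

lemma reduce (p : MvPolynomial (Fin 3) ℂ) :
    ∃ (n : ℕ) (q : PolyXY), relPoly ∣ X 0 ^ n * p - iotaMap q := by
  have i0 : iotaMap (X 0) = X 2 := by simp [iotaMap]
  have i1 : iotaMap (X 1) = X 0 := by simp [iotaMap]
  induction p using MvPolynomial.induction_on with
  | C a => exact ⟨0, C a, by simp [iotaMap, MvPolynomial.algebraMap_eq]⟩
  | add p p' h h' =>
    obtain ⟨n, q, a, h⟩ := h
    obtain ⟨m, r, b, h'⟩ := h'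
    refine ⟨n + m, X 1 ^ m * q + X 1 ^ n * r, X 0 ^ m * a + X 0 ^ n * b, ?_⟩
    simp only [map_add, map_mul, map_pow, i1]
    linear_combination X 0 ^ m * h + X 0 ^ n * h'
  | mul_X p i h =>
    obtain ⟨n, q, a, h⟩ := h
    fin_cases i
    · refine ⟨n, q * X 1, a * X 0, ?_⟩
      simp only [map_mul, i1, Fin.zero_eta]
      linear_combination X 0 * h
    · refine ⟨n + 1, q * X 0 ^ 2, a * X 0 * X 1 + iotaMap q, ?_⟩
      simp only [map_mul, map_pow, i0, Fin.mk_one]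
      linear_combination X 0 * X 1 * h
    · refine ⟨n, q * X 0, a * X 2, ?_⟩
      simp only [map_mul, i0, Fin.reduceFinMk]
      linear_combination X 2 * h

lemma not_dvd_rel : ¬ (X 0 : MvPolynomial (Fin 3) ℂ) ∣ relPoly := by
  rintro ⟨c, hc⟩
  have := congrArg (MvPolynomial.eval ![0, 0, 1]) hc
  simp [relPoly] at this

lemma cancel_X (n : ℕ) (p : MvPolynomial (Fin 3) ℂ) (h : relPoly ∣ X 0 ^ n * p) :
    relPoly ∣ p := by
  induction n with
  | zero => simpa using h
  | succ n ih =>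
    apply ih
    obtain ⟨g, hg⟩ := h
    have hd : (X 0 : MvPolynomial (Fin 3) ℂ) ∣ relPoly * g :=
      ⟨X 0 ^ n * p, by rw [← hg]; ring⟩
    rcases (MvPolynomial.X_prime (R := ℂ) (i := (0 : Fin 3))).dvd_or_dvd hd with h | ⟨k, rfl⟩
    · exact absurd h not_dvd_rel
    · refine ⟨k, mul_left_cancel₀ (X_ne_zero (R := ℂ) (0 : Fin 3)) ?_⟩
      linear_combination hg

lemma ker_phi : RingHom.ker phiMap = Ideal.span {relPoly} := by
  ext p
  rw [RingHom.mem_ker, Ideal.mem_span_singleton]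
  constructor
  · intro hp
    obtain ⟨n, q, a, h⟩ := reduce p
    have h2 := congrArg phiMap h
    rw [map_sub, map_mul, map_mul, hp, phi_rel, phi_iota] at h2
    have hq : q = 0 := psi_inj q (by linear_combination -h2)
    subst hq
    exact cancel_X n p ⟨a, by simpa using h⟩
  · rintro ⟨a, rfl⟩
    rw [map_mul, phi_rel, zero_mul]

lemma range_phi : phiMap.range =
    Algebra.adjoin ℂ ({yInv, xElem ^ 2 * yElem, xElem} : Set LocAwayY) := by
  unfold phiMap
  rw [← Algebra.adjoin_range_eq_range_aeval]
  congr 1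
  simp only [Matrix.range_cons, Matrix.range_empty, Set.union_empty, Set.singleton_union]

/-- The moduli space of the `ℂ³/ℤ₅` model near the `ℤ₂` orbifold point:
the `ℂ`-subalgebra of the localization of `ℂ[x,y]` at the powers of `y` generated by
`y⁻¹`, `x²y` and `x` is isomorphic, as a `ℂ`-algebra, to `ℂ[u,v,w]/(uv − w²)`,
via `u ↦ y⁻¹`, `v ↦ x²y`, `w ↦ x`. -/
theorem Z2_point_is_A1_singularity :
    ∃ e : (MvPolynomial (Fin 3) ℂ ⧸
            Ideal.span {(X 0 * X 1 - X 2 ^ 2 : MvPolynomial (Fin 3) ℂ)}) ≃ₐ[ℂ]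
          (Algebra.adjoin ℂ ({yInv, xElem ^ 2 * yElem, xElem} : Set LocAwayY)),
      ((e (Ideal.Quotient.mk _ (X 0)) : LocAwayY) = yInv) ∧
      ((e (Ideal.Quotient.mk _ (X 1)) : LocAwayY) = xElem ^ 2 * yElem) ∧
      ((e (Ideal.Quotient.mk _ (X 2)) : LocAwayY) = xElem) := by
  refine ⟨((Ideal.quotientEquivAlgOfEq ℂ ker_phi.symm).trans
    (Ideal.quotientKerEquivRange phiMap)).trans
      (Subalgebra.equivOfEq _ _ range_phi), ?_, ?_, ?_⟩
  · change phiMap (X 0) = _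
    simp [phiMap]
  · change phiMap (X 1) = _
    simp [phiMap]
  · change phiMap (X 2) = _
    simp [phiMap]
end

section
/- Let n ≥ 1 and let a : Fin n → ℕ satisfy aᵢ ≥ 1 for all i, and set m = Σᵢ aᵢ. Writing a_I = Σ_{i∈I} aᵢ for I ⊆ Fin n, the following identity of integers holds: Σ_{I ⊆ Fin n} (−1)^{#I} · ( Σ_{l = 0}^{m−1} (if a_I ≤ l then l − a_I else 0) ) = Σ_{I ⊆ Fin n, 0 ∉ I} (−1)^{#I} · ( Σ_{l = m − a₀}^{m−1} (l − a_I) ), where a₀ = a(0). (Note that a_I ≤ m − a₀ ≤ l for every I with 0 ∉ I and every l in the right-hand range.) -/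
open Finset

theorem key_aux (S c k : ℕ) (h : S ≤ k) :
    (∑ l ∈ Finset.range (k + c), (if S ≤ l then (l : ℤ) - (S : ℕ) else 0)) -
    (∑ l ∈ Finset.range (k + c), (if c + S ≤ l then (l : ℤ) - (c + S : ℕ) else 0)) =
    ∑ l ∈ Finset.Ico k (k + c), ((l : ℤ) - (S : ℕ)) := by
  have h2 : (∑ l ∈ Finset.range (k + c), (if c + S ≤ l then (l : ℤ) - (c + S : ℕ) else 0)) =
      ∑ l ∈ Finset.range k, (if S ≤ l then (l : ℤ) - (S : ℕ) else 0) := by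
    rw [add_comm k c, Finset.sum_range_add, Finset.sum_eq_zero, zero_add]
    · refine Finset.sum_congr rfl fun l _ => ?_
      simp
    · intro l hl
      rw [Finset.mem_range] at hl
      rw [if_neg (by omega)]
  rw [h2, ← Finset.sum_range_add_sum_Ico _ (Nat.le_add_right k c), add_sub_cancel_left]
  refine Finset.sum_congr rfl fun l hl => ?_
  rw [Finset.mem_Ico] at hl
  rw [if_pos (by omega)]

/-- Combinatorial cancellation in the K-theory lemma for the dual exceptional
collection on `𝐏ⁿ⁻¹(a₁,…,aₙ)`: with `m = Σ aᵢ`, the alternating sum over all pairs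
`(l, I)` with `a_I ≤ l < m` of `l − a_I` reduces to the sum over subsets `I` not
containing the first index and `m − a₀ ≤ l < m`. -/
theorem koszul_cancellation {n : ℕ} (hn : 0 < n) (a : Fin n → ℕ)
    (ha : ∀ i, 1 ≤ a i) (m : ℕ) (hm : m = ∑ i, a i) :
    (∑ I : Finset (Fin n), (-1 : ℤ) ^ I.card *
        ∑ l ∈ Finset.range m,
          (if (∑ i ∈ I, a i) ≤ l then (l : ℤ) - (∑ i ∈ I, a i : ℕ) else 0)) =
    ∑ I ∈ Finset.univ.filter (fun I : Finset (Fin n) => (⟨0, hn⟩ : Fin n) ∉ I),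
        (-1 : ℤ) ^ I.card *
        ∑ l ∈ Finset.Ico (m - a ⟨0, hn⟩) m, ((l : ℤ) - (∑ i ∈ I, a i : ℕ)) := by
  classical
  rw [← Finset.sum_filter_not_add_sum_filter Finset.univ
    (fun I : Finset (Fin n) => (⟨0, hn⟩ : Fin n) ∈ I)]
  have hin : ∀ f : Finset (Fin n) → ℤ,
      ∑ I ∈ Finset.univ.filter (fun I : Finset (Fin n) => (⟨0, hn⟩ : Fin n) ∈ I), f I =
      ∑ I ∈ Finset.univ.filter (fun I : Finset (Fin n) => (⟨0, hn⟩ : Fin n) ∉ I),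
        f (insert ⟨0, hn⟩ I) := by
    intro f
    refine Finset.sum_bij' (fun I _ => I.erase ⟨0, hn⟩) (fun I _ => insert ⟨0, hn⟩ I)
      ?_ ?_ ?_ ?_ ?_
    · intro I hI; simp
    · intro I hI; simp
    · intro I hI; exact Finset.insert_erase (Finset.mem_filter.1 hI).2
    · intro I hI; exact Finset.erase_insert (Finset.mem_filter.1 hI).2
    · intro I hI; rw [Finset.insert_erase (Finset.mem_filter.1 hI).2]
  rw [hin, ← Finset.sum_add_distrib]
  refine Finset.sum_congr rfl fun I hI => ?_
  have h0 := (Finset.mem_filter.1 hI).2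
  have hle : a ⟨0, hn⟩ + ∑ i ∈ I, a i ≤ m := by
    rw [hm, ← Finset.sum_insert h0]
    exact Finset.sum_le_sum_of_subset (Finset.subset_univ _)
  obtain ⟨k, rfl⟩ : ∃ k, m = k + a ⟨0, hn⟩ := ⟨m - a ⟨0, hn⟩, by omega⟩
  rw [Finset.card_insert_of_notMem h0, Finset.sum_insert h0, Nat.add_sub_cancel,
    ← key_aux (∑ i ∈ I, a i) (a ⟨0, hn⟩) k (by omega)]
  ring
end

section
/- Let n ≥ 2 and let a : Fin n → ℕ satisfy aᵢ ≥ 1 for all i, and set m = Σᵢ aᵢ and a_I = Σ_{i∈I} aᵢ for I ⊆ Fin n. Then Σ_{I ⊆ Fin n} (−1)^{#I} · ( Σ_{l = 0}^{m−1} (if a_I ≤ l then l − a_I else 0) ) = −a₀ · Σ_{I ⊆ Fin n, 0 ∉ I} (−1)^{#I} · a_I, where a₀ = a(0); in particular this quantity equals a₀·a₁ when n = 2 and equals 0 whenever n ≥ 3. -/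
open Finset

theorem aux_inner (m s : ℕ) (h : s ≤ m) :
    2 * ∑ l ∈ Finset.range m, (if s ≤ l then (l : ℤ) - (s : ℤ) else 0)
      = ((m : ℤ) - s) * ((m : ℤ) - s - 1) := by
  induction m, h using Nat.le_induction with
  | base =>
    rw [Finset.sum_eq_zero]
    · simp
    · intro l hl
      rw [if_neg (by simpa using hl)]
  | succ k hk ih =>
    rw [Finset.sum_range_succ, mul_add, ih, if_pos hk]
    push_cast
    ring

theorem aux_insert {α : Type*} [DecidableEq α] (f : ℤ → ℤ) (a : α → ℕ) (x : α) (S : Finset α)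
    (hx : x ∉ S) :
    ∑ I ∈ (insert x S).powerset, (-1 : ℤ) ^ I.card * f ((∑ i ∈ I, a i : ℕ) : ℤ) =
      ∑ I ∈ S.powerset, (-1 : ℤ) ^ I.card *
        (f ((∑ i ∈ I, a i : ℕ) : ℤ) - f ((a x : ℤ) + (∑ i ∈ I, a i : ℕ))) := by
  rw [Finset.sum_powerset_insert hx, ← Finset.sum_add_distrib]
  refine Finset.sum_congr rfl fun I hI => ?_
  have hxI : x ∉ I := fun h => hx (Finset.mem_powerset.1 hI h)
  rw [Finset.card_insert_of_notMem hxI, Finset.sum_insert hxI, pow_succ]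
  push_cast
  ring

theorem aux_lin {α : Type*} [DecidableEq α] (a : α → ℕ) (S : Finset α) (hS : 2 ≤ S.card) :
    ∑ I ∈ S.powerset, (-1 : ℤ) ^ I.card * ((∑ i ∈ I, a i : ℕ) : ℤ) = 0 := by
  obtain ⟨x, hx⟩ : S.Nonempty := Finset.card_pos.1 (by omega)
  have hne : (S.erase x).Nonempty := Finset.card_pos.1 (by
    rw [Finset.card_erase_of_mem hx]; omega)
  have h := aux_insert (fun z => z) a x (S.erase x) (Finset.notMem_erase x S)
  rw [Finset.insert_erase hx] at h
  rw [h]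
  have h0 := Finset.sum_powerset_neg_one_pow_card_of_nonempty hne
  calc _ = ∑ I ∈ (S.erase x).powerset, (-1 : ℤ) ^ I.card * (-(a x : ℤ)) :=
        Finset.sum_congr rfl fun I _ => by ring
    _ = 0 := by rw [← Finset.sum_mul, h0, zero_mul]

theorem aux_quad {α : Type*} [DecidableEq α] (a : α → ℕ) (x : α) (S : Finset α) (hx : x ∉ S)
    (hS : S.Nonempty) (m : ℤ) :
    ∑ I ∈ (insert x S).powerset, (-1 : ℤ) ^ I.card *
        ((m - (∑ i ∈ I, a i : ℕ)) * (m - (∑ i ∈ I, a i : ℕ) - 1)) =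
      2 * (-(a x : ℤ) * ∑ I ∈ S.powerset, (-1 : ℤ) ^ I.card * ((∑ i ∈ I, a i : ℕ) : ℤ)) := by
  have h := aux_insert (fun z => (m - z) * (m - z - 1)) a x S hx
  rw [h]
  have h0 := Finset.sum_powerset_neg_one_pow_card_of_nonempty hS
  calc _ = ∑ I ∈ S.powerset, ((-1 : ℤ) ^ I.card * ((a x : ℤ) * (2 * m - a x - 1)) +
          2 * (-(a x : ℤ)) * ((-1 : ℤ) ^ I.card * ((∑ i ∈ I, a i : ℕ) : ℤ))) :=
        Finset.sum_congr rfl fun I _ => by ring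
    _ = _ := by
        rw [Finset.sum_add_distrib, ← Finset.sum_mul, h0, ← Finset.mul_sum]
        ring

/-- Evaluated form of the combinatorial cancellation in the K-theory lemma:
with `m = Σ aᵢ` and `n ≥ 2`, the first Chern coefficient of `Σₗ [𝓜₍₋ₗ₎]` equals
`−a₀ · Σ_{I, 0∉I} (−1)^{#I} a_I`; it equals `a₀·a₁` when `n = 2` and `0` when
`n ≥ 3`. -/
theorem koszul_cancellation_evaluated {n : ℕ} (hn : 2 ≤ n) (a : Fin n → ℕ)
    (ha : ∀ i, 1 ≤ a i) (m : ℕ) (hm : m = ∑ i, a i) :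
    ((∑ I : Finset (Fin n), (-1 : ℤ) ^ I.card *
        ∑ l ∈ Finset.range m,
          (if (∑ i ∈ I, a i) ≤ l then (l : ℤ) - (∑ i ∈ I, a i : ℕ) else 0)) =
      -(a ⟨0, by omega⟩ : ℤ) *
        ∑ I ∈ Finset.univ.filter (fun I : Finset (Fin n) => (⟨0, by omega⟩ : Fin n) ∉ I),
          (-1 : ℤ) ^ I.card * (∑ i ∈ I, a i : ℕ)) ∧
    (n = 2 →
      (∑ I : Finset (Fin n), (-1 : ℤ) ^ I.card *
          ∑ l ∈ Finset.range m,
            (if (∑ i ∈ I, a i) ≤ l then (l : ℤ) - (∑ i ∈ I, a i : ℕ) else 0)) =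
        (a ⟨0, by omega⟩ : ℤ) * (a ⟨1, by omega⟩ : ℤ)) ∧
    (3 ≤ n →
      (∑ I : Finset (Fin n), (-1 : ℤ) ^ I.card *
          ∑ l ∈ Finset.range m,
            (if (∑ i ∈ I, a i) ≤ l then (l : ℤ) - (∑ i ∈ I, a i : ℕ) else 0)) = 0) := by
  have hS : (Finset.univ.erase (⟨0, by omega⟩ : Fin n)).card = n - 1 := by
    rw [Finset.card_erase_of_mem (Finset.mem_univ _)]; simp
  have hF : Finset.univ.filter (fun I : Finset (Fin n) => (⟨0, by omega⟩ : Fin n) ∉ I) =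
      (Finset.univ.erase (⟨0, by omega⟩ : Fin n)).powerset := by
    ext I
    simp [Finset.subset_erase]
  have main : (∑ I : Finset (Fin n), (-1 : ℤ) ^ I.card *
        ∑ l ∈ Finset.range m,
          (if (∑ i ∈ I, a i) ≤ l then (l : ℤ) - (∑ i ∈ I, a i : ℕ) else 0)) =
      -(a ⟨0, by omega⟩ : ℤ) *
        ∑ I ∈ Finset.univ.filter (fun I : Finset (Fin n) => (⟨0, by omega⟩ : Fin n) ∉ I),
          (-1 : ℤ) ^ I.card * (∑ i ∈ I, a i : ℕ) := by
    rw [hF]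
    have hq := aux_quad a (⟨0, by omega⟩ : Fin n) (Finset.univ.erase (⟨0, by omega⟩ : Fin n))
      (Finset.notMem_erase _ _) (Finset.card_pos.1 (by omega)) (m : ℤ)
    rw [Finset.insert_erase (Finset.mem_univ _), Finset.powerset_univ] at hq
    apply mul_left_cancel₀ (two_ne_zero : (2 : ℤ) ≠ 0)
    rw [← hq, Finset.mul_sum]
    refine Finset.sum_congr rfl fun I _ => ?_
    have hle : ∑ i ∈ I, a i ≤ m := by
      rw [hm]
      exact Finset.sum_le_sum_of_subset (Finset.subset_univ I)
    rw [mul_left_comm, aux_inner m _ hle]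
  refine ⟨main, fun h2 => ?_, fun h3 => ?_⟩
  · rw [main, hF]
    subst h2
    have hE : (Finset.univ.erase (⟨0, by omega⟩ : Fin 2)) = insert (1 : Fin 2) ∅ := by
      ext i; fin_cases i <;> simp
    rw [hE, Finset.sum_powerset_insert (by simp)]
    simp
  · rw [main, hF, aux_lin a _ (by omega), mul_zero]
end
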